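/- Let C be a group system, t ∈ ℤ, and k ≥ 1. Let S ⊆ C^{[t,t+k]} be a transversal of the granule, i.e., the quotient map C^{[t,t+k]} → C^{[t,t+k]}/(C^{[t,t+k−1]}C^{[t+1,t+k]}) restricted to S is a bijection onto the granule Γ^{[t,t+k]}. Then for every j with 0 ≤ j ≤ k, β^{t+j}(D_{k−1}^t) is normal in β^{t+j}(D_k^t), each β^{t+j}(a) for a ∈ S lies in β^{t+j}(D_k^t), and the map a ↦ β^{t+j}(a)·β^{t+j}(D_{k−1}^t) is a bijection from S onto the quotient group β^{t+j}(D_k^t)/β^{t+j}(D_{k−1}^t); that is, the (t+j)-th branch components of a set of generators form a transversal of the corresponding quotient, and all these quotients have the same number of elements. -/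

import Mathlib

open scoped Pointwise

namespace GroupSystemPaper

variable {A : ℤ → Type*} [∀ t, Group (A t)]

/-- `C^{t+}` : codewords of the group system `C` that are the identity before time `t`. -/
def Cplus (C : Subgroup (∀ t, A t)) (t : ℤ) : Subgroup C where
  carrier := {a | ∀ n < t, (a : ∀ s, A s) n = 1}
  one_mem' := by intro n hn; simp
  mul_mem' := by intro a b ha hb n hn; simp [ha n hn, hb n hn]
  inv_mem' := by intro a ha n hn; simp [ha n hn]

/-- `C^{t−}` : codewords of the group system `C` that are the identity from time `t` on. -/
def Cminus (C : Subgroup (∀ t, A t)) (t : ℤ) : Subgroup C where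
  carrier := {a | ∀ n, t ≤ n → (a : ∀ s, A s) n = 1}
  one_mem' := by intro n hn; simp
  mul_mem' := by intro a b ha hb n hn; simp [ha n hn, hb n hn]
  inv_mem' := by intro a ha n hn; simp [ha n hn]

/-- `C^{[t₁,t₂]}` : codewords supported on the interval `[t₁, t₂]`. -/
def Cint (C : Subgroup (∀ t, A t)) (t₁ t₂ : ℤ) : Subgroup C :=
  Cplus C t₁ ⊓ Cminus C (t₂ + 1)

instance Cplus_normal (C : Subgroup (∀ t, A t)) (t : ℤ) : (Cplus C t).Normal := by
  constructor
  intro x hx g n hn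
  have h1 : (x : ∀ s, A s) n = 1 := hx n hn
  simp [h1]

instance Cminus_normal (C : Subgroup (∀ t, A t)) (t : ℤ) : (Cminus C t).Normal := by
  constructor
  intro x hx g n hn
  have h1 : (x : ∀ s, A s) n = 1 := hx n hn
  simp [h1]

instance Cint_normal (C : Subgroup (∀ t, A t)) (t₁ t₂ : ℤ) : (Cint C t₁ t₂).Normal := by
  constructor
  intro x hx g
  rcases Subgroup.mem_inf.mp hx with ⟨h1, h2⟩
  exact Subgroup.mem_inf.mpr
    ⟨(Cplus_normal C t₁).conj_mem _ h1 g, (Cminus_normal C (t₂ + 1)).conj_mem _ h2 g⟩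

/-- The normal subgroup `C^{t−}C^{t+}` of `C`. -/
def stateN (C : Subgroup (∀ t, A t)) (t : ℤ) : Subgroup C :=
  Cminus C t ⊔ Cplus C t

instance stateN_normal (C : Subgroup (∀ t, A t)) (t : ℤ) : (stateN C t).Normal :=
  Subgroup.sup_normal _ _

/-- The canonical state space `Σ^t = C/(C^{t−}C^{t+})`. -/
abbrev State (C : Subgroup (∀ t, A t)) (t : ℤ) : Type _ :=
  ↥C ⧸ stateN C t

/-- The state projection `σ^t : C → Σ^t`. -/
def sigma (C : Subgroup (∀ t, A t)) (t : ℤ) : ↥C →* State C t :=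
  QuotientGroup.mk' (stateN C t)

/-- The evaluation homomorphism `χ^t : C → A^t`. -/
def evalHom (C : Subgroup (∀ t, A t)) (t : ℤ) : ↥C →* A t :=
  (Pi.evalMonoidHom A t).comp C.subtype

/-- The branch homomorphism `β^t : C → Σ^t × A^t × Σ^{t+1}`. -/
def beta (C : Subgroup (∀ t, A t)) (t : ℤ) :
    ↥C →* State C t × A t × State C (t + 1) :=
  (sigma C t).prod ((evalHom C t).prod (sigma C (t + 1)))

/-- The branch group `B^t = β^t(C)`. -/
def Branch (C : Subgroup (∀ t, A t)) (t : ℤ) :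
    Subgroup (State C t × A t × State C (t + 1)) :=
  (beta C t).range

/-- `β^t` with codomain restricted to the branch group `B^t`. -/
def betaRes (C : Subgroup (∀ t, A t)) (t : ℤ) : ↥C →* ↥(Branch C t) :=
  (beta C t).rangeRestrict

/-- `X_j^t = β^t(C^{(t−j)+})` as a subgroup of the branch group `B^t`. -/
def X (C : Subgroup (∀ t, A t)) (j t : ℤ) : Subgroup ↥(Branch C t) :=
  (Cplus C (t - j)).map (betaRes C t)

/-- `Y_i^t = β^t(C^{(t+i+1)−})` as a subgroup of the branch group `B^t`. -/
def Y (C : Subgroup (∀ t, A t)) (i t : ℤ) : Subgroup ↥(Branch C t) :=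
  (Cminus C (t + i + 1)).map (betaRes C t)

instance X_normal (C : Subgroup (∀ t, A t)) (j t : ℤ) : (X C j t).Normal :=
  (Cplus_normal C (t - j)).map _ (MonoidHom.rangeRestrict_surjective _)

instance Y_normal (C : Subgroup (∀ t, A t)) (i t : ℤ) : (Y C i t).Normal :=
  (Cminus_normal C (t + i + 1)).map _ (MonoidHom.rangeRestrict_surjective _)

/-- `Δ_k^t = X_0^t ∩ Y_k^t`. -/
def Del (C : Subgroup (∀ t, A t)) (k t : ℤ) : Subgroup ↥(Branch C t) :=
  X C 0 t ⊓ Y C k t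

/-- `D_k^t = {a ∈ C : β^t(a) ∈ Δ_k^t}`. -/
def D (C : Subgroup (∀ t, A t)) (k t : ℤ) : Subgroup ↥C :=
  (Del C k t).comap (betaRes C t)

/-- Following-branch operator: for `S ⊆ B^{t₁}`,
`FSet C t₁ t₂ S = {β^{t₂}(a) : a ∈ C, β^{t₁}(a) ∈ S}`. -/
def FSet (C : Subgroup (∀ t, A t)) (t₁ t₂ : ℤ) (S : Set ↥(Branch C t₁)) :
    Set ↥(Branch C t₂) :=
  {x | ∃ a : ↥C, betaRes C t₁ a ∈ S ∧ betaRes C t₂ a = x}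

/-- `π^{[t,t+k]} : C → B^t × ⋯ × B^{t+k}`, `a ↦ (β^t(a), …, β^{t+k}(a))`. -/
def piSeg (C : Subgroup (∀ t, A t)) (t : ℤ) (k : ℕ) :
    ↥C →* ∀ j : Fin (k + 1), ↥(Branch C (t + ((j : ℕ) : ℤ))) where
  toFun a := fun j => betaRes C (t + ((j : ℕ) : ℤ)) a
  map_one' := by funext j; simp
  map_mul' a b := by funext j; simp

/-- `π^{[t,t+k]}(D_m^t)`. -/
def Pseg (C : Subgroup (∀ t, A t)) (t : ℤ) (k : ℕ) (m : ℤ) :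
    Subgroup (∀ j : Fin (k + 1), ↥(Branch C (t + ((j : ℕ) : ℤ)))) :=
  (D C m t).map (piSeg C t k)

/-- `β^{t+j}(D_m^t)` : the image of `D_m^t` in the branch group at time `t + j`. -/
def Qb (C : Subgroup (∀ t, A t)) (t m j : ℤ) : Subgroup ↥(Branch C (t + j)) :=
  (D C m t).map (betaRes C (t + j))

/-- The normal subgroup `C^{[t,t+k−1]}C^{[t+1,t+k]}` of `C` (denominator of the granule). -/
def granN (C : Subgroup (∀ t, A t)) (t : ℤ) (k : ℕ) : Subgroup ↥C :=
  Cint C t (t + k - 1) ⊔ Cint C (t + 1) (t + k)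

instance granN_normal (C : Subgroup (∀ t, A t)) (t : ℤ) (k : ℕ) : (granN C t k).Normal :=
  Subgroup.sup_normal _ _

lemma mem_D_of_mem_Cint (C : Subgroup (∀ t, A t)) (t : ℤ) (k : ℕ) {a : ↥C}
    (ha : a ∈ Cint C t (t + k)) : a ∈ D C (k : ℤ) t := by
  rcases Subgroup.mem_inf.mp ha with ⟨h1, h2⟩
  refine Subgroup.mem_comap.mpr (Subgroup.mem_inf.mpr ⟨?_, ?_⟩)
  · exact Subgroup.mem_map.mpr ⟨a, by simpa using h1, rfl⟩
  · exact Subgroup.mem_map.mpr ⟨a, h2, rfl⟩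

/-- `ℓ`-controllability of the group system `C`. -/
def Controllable (C : Subgroup (∀ t, A t)) (ℓ : ℕ) : Prop :=
  ∀ a b : ↥C, ∀ t : ℤ, ∃ c : ↥C,
    (∀ n < t, (c : ∀ s, A s) n = (a : ∀ s, A s) n) ∧
    (∀ n, t + (ℓ : ℤ) ≤ n → (c : ∀ s, A s) n = (b : ∀ s, A s) n)

lemma Cplus_anti (C : Subgroup (∀ t, A t)) {s t : ℤ} (h : s ≤ t) : Cplus C t ≤ Cplus C s :=
  fun _ ha n hn => ha n (lt_of_lt_of_le hn h)

lemma Cminus_mono (C : Subgroup (∀ t, A t)) {s t : ℤ} (h : s ≤ t) : Cminus C s ≤ Cminus C t :=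
  fun _ ha n hn => ha n (le_trans h hn)

lemma ker_betaRes (C : Subgroup (∀ t, A t)) (s : ℤ) :
    (betaRes C s).ker = Cminus C s ⊔ Cplus C (s + 1) := by
  have hb : ∀ a : ↥C, a ∈ (betaRes C s).ker ↔
      a ∈ stateN C s ∧ (a : ∀ s, A s) s = 1 ∧ a ∈ stateN C (s + 1) := by
    intro a
    have h0 : a ∈ (betaRes C s).ker ↔ beta C s a = 1 := by
      rw [MonoidHom.mem_ker, Subtype.ext_iff]
      rfl
    rw [h0, beta]
    simp [sigma, evalHom, Prod.ext_iff]
  apply le_antisymm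
  · intro a ha
    obtain ⟨h1, h2, -⟩ := (hb a).1 ha
    obtain ⟨x, hx, y, hy, rfl⟩ := Subgroup.mem_sup_of_normal_right.1 h1
    refine Subgroup.mul_mem_sup hx ?_
    have hxs : (x : ∀ s, A s) s = 1 := hx s le_rfl
    intro n hn
    rcases lt_or_eq_of_le (Int.lt_add_one_iff.1 hn) with h | rfl
    · exact hy n h
    · simpa [hxs] using h2
  · refine sup_le (fun a ha => (hb a).2 ⟨?_, ?_, ?_⟩) (fun a ha => (hb a).2 ⟨?_, ?_, ?_⟩)
    · exact Subgroup.mem_sup_left ha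
    · exact ha s le_rfl
    · exact Subgroup.mem_sup_left (Cminus_mono C (by omega) ha)
    · exact Subgroup.mem_sup_right (Cplus_anti C (by omega) ha)
    · exact ha s (by omega)
    · exact Subgroup.mem_sup_right ha

lemma D_eq (C : Subgroup (∀ t, A t)) (m t : ℤ) :
    D C m t = (Cplus C t ⊔ (Cminus C t ⊔ Cplus C (t + 1))) ⊓
      (Cminus C (t + m + 1) ⊔ (Cminus C t ⊔ Cplus C (t + 1))) := by
  simp only [D, Del, X, Y, Subgroup.comap_inf, Subgroup.comap_map_eq, ker_betaRes, sub_zero]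

lemma exists_split (C : Subgroup (∀ t, A t)) {t s t' : ℤ} (h : t ≤ t') {a : ↥C}
    (ha : a ∈ Cplus C t) (h2 : a ∈ Cminus C s ⊔ Cplus C t') :
    ∃ p ∈ Cplus C t ⊓ Cminus C s, ∃ q ∈ Cplus C t', p * q = a := by
  obtain ⟨p, hp, q, hq, rfl⟩ := Subgroup.mem_sup_of_normal_right.1 h2
  exact ⟨p, ⟨((Cplus C t).mul_mem_cancel_right (Cplus_anti C h hq)).1 ha, hp⟩, q, hq, rfl⟩

lemma D_normal (C : Subgroup (∀ t, A t)) (m t : ℤ) : (D C m t).Normal := by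
  unfold D Del; infer_instance

lemma ker_le_D (C : Subgroup (∀ t, A t)) (m t : ℤ) :
    Cminus C t ⊔ Cplus C (t + 1) ≤ D C m t := by
  rw [D_eq]; exact le_inf le_sup_right le_sup_right

lemma mem_Qb_iff (C : Subgroup (∀ t, A t)) (t : ℤ) (k j : ℕ) (hk : 1 ≤ k) (hj : j ≤ k)
    {a : ↥C} (ha : a ∈ Cint C t (t + k)) :
    betaRes C (t + (j : ℤ)) a ∈ Qb C t ((k : ℤ) - 1) (j : ℤ) ↔ a ∈ granN C t k := by
  constructor
  · intro h
    have h1 : a ∈ D C ((k : ℤ) - 1) t ⊔ (betaRes C (t + (j : ℤ))).ker := by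
      rw [← Subgroup.comap_map_eq]; exact h
    have h2 : D C ((k : ℤ) - 1) t ⊔ (betaRes C (t + (j : ℤ))).ker ≤
        Cminus C (t + k) ⊔ Cplus C (t + 1) := by
      rw [ker_betaRes, D_eq]
      refine sup_le (inf_le_right.trans (sup_le ?_ (sup_le ?_ le_sup_right))) (sup_le ?_ ?_)
      · exact (Cminus_mono C (by omega)).trans le_sup_left
      · exact (Cminus_mono C (by omega)).trans le_sup_left
      · exact (Cminus_mono C (by omega)).trans le_sup_left
      · exact (Cplus_anti C (by omega)).trans le_sup_right
    obtain ⟨p, ⟨hp1, hp2⟩, q, hq, rfl⟩ := exists_split C (by omega) ha.1 (h2 h1)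
    refine Subgroup.mul_mem_sup ⟨hp1, ?_⟩ ⟨hq, ?_⟩
    · exact Cminus_mono C (by omega) hp2
    · exact ((Cminus C _).mul_mem_cancel_left (Cminus_mono C (by omega) hp2)).1 ha.2
  · intro h
    refine Subgroup.mem_map_of_mem _ ?_
    have : granN C t k ≤ D C ((k : ℤ) - 1) t := by
      refine sup_le ?_ ((inf_le_left.trans le_sup_right).trans (ker_le_D C _ t))
      rw [D_eq]
      refine le_inf (inf_le_left.trans le_sup_left) (inf_le_right.trans ?_)
      exact (Cminus_mono C (by omega)).trans le_sup_left
    exact this h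

lemma exists_rep (C : Subgroup (∀ t, A t)) (t : ℤ) (k : ℕ) {d : ↥C}
    (hd : d ∈ D C (k : ℤ) t) :
    ∃ c ∈ Cint C t (t + k), c⁻¹ * d ∈ D C ((k : ℤ) - 1) t := by
  rw [D_eq] at hd
  obtain ⟨h1, h2⟩ := hd
  have h1' : d ∈ Cminus C t ⊔ Cplus C t := by
    refine (sup_le le_sup_right (sup_le le_sup_left ?_) : _ ≤ Cminus C t ⊔ Cplus C t) h1
    exact (Cplus_anti C (by omega)).trans le_sup_right
  have h2' : d ∈ Cminus C (t + k + 1) ⊔ Cplus C (t + 1) := by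
    refine (sup_le le_sup_left (sup_le ?_ le_sup_right) :
      _ ≤ Cminus C (t + k + 1) ⊔ Cplus C (t + 1)) h2
    exact (Cminus_mono C (by omega)).trans le_sup_left
  obtain ⟨x, hx, y, hy, rfl⟩ := Subgroup.mem_sup_of_normal_right.1 h1'
  have hx2 : x ∈ Cminus C (t + k + 1) ⊔ Cplus C (t + 1) :=
    Subgroup.mem_sup_left (Cminus_mono C (by omega) hx)
  have hy2 := (Subgroup.mul_mem_cancel_left _ hx2).1 h2'
  obtain ⟨p, hp, q, hq, rfl⟩ := exists_split C (by omega) hy hy2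
  refine ⟨p, hp, ker_le_D C _ t ?_⟩
  have : p⁻¹ * (x * (p * q)) = (p⁻¹ * x * p⁻¹⁻¹) * q := by group
  rw [this]
  exact Subgroup.mul_mem_sup ((Cminus_normal C t).conj_mem _ hx _) hq

lemma bij_main (C : Subgroup (∀ t, A t)) (t : ℤ) (k : ℕ) (hk : 1 ≤ k)
    (S : Set ↥(Cint C t (t + (k : ℤ))))
    (hS : Set.BijOn
      (fun a : ↥(Cint C t (t + (k : ℤ))) =>
        (QuotientGroup.mk a :
          ↥(Cint C t (t + (k : ℤ))) ⧸ (granN C t k).subgroupOf (Cint C t (t + (k : ℤ)))))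
      S Set.univ) (j : ℕ) (hj : j ≤ k) :
      Set.BijOn
        (fun a : ↥(Cint C t (t + (k : ℤ))) =>
          (QuotientGroup.mk
            (⟨betaRes C (t + (j : ℤ)) (a : ↥C),
              Subgroup.mem_map_of_mem _ (mem_D_of_mem_Cint C t k a.2)⟩ :
              ↥(Qb C t (k : ℤ) (j : ℤ))) :
            ↥(Qb C t (k : ℤ) (j : ℤ)) ⧸
              (Qb C t ((k : ℤ) - 1) (j : ℤ)).subgroupOf (Qb C t (k : ℤ) (j : ℤ))))
        S Set.univ := by
  have key : ∀ a b : ↥(Cint C t (t + (k : ℤ))),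
      (betaRes C (t + (j : ℤ)) (a : ↥C))⁻¹ * betaRes C (t + (j : ℤ)) (b : ↥C) ∈
        Qb C t ((k : ℤ) - 1) (j : ℤ) ↔ (a : ↥C)⁻¹ * b ∈ granN C t k := by
    intro a b
    rw [← map_inv, ← map_mul]
    exact mem_Qb_iff C t k j hk hj (mul_mem (inv_mem a.2) b.2)
  refine ⟨fun _ _ => Set.mem_univ _, ?_, ?_⟩
  · intro a ha b hb hab
    refine hS.injOn ha hb ?_
    have h := QuotientGroup.eq.1 hab
    refine QuotientGroup.eq.2 ?_
    rw [Subgroup.mem_subgroupOf] at h ⊢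
    exact (key a b).1 h
  · intro x _
    induction x using QuotientGroup.induction_on with
    | H x =>
      obtain ⟨x, d, hd, rfl⟩ := x
      obtain ⟨c, hc, hcd⟩ := exists_rep C t k hd
      obtain ⟨a, ha, hac⟩ := hS.surjOn (Set.mem_univ (QuotientGroup.mk ⟨c, hc⟩))
      refine ⟨a, ha, ?_⟩
      have h := QuotientGroup.eq.1 hac
      refine QuotientGroup.eq.2 ?_
      rw [Subgroup.mem_subgroupOf] at h ⊢
      have h1 := (key a ⟨c, hc⟩).2 h
      have h2 : betaRes C (t + (j : ℤ)) (c⁻¹ * d) ∈ Qb C t ((k : ℤ) - 1) (j : ℤ) :=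
        Subgroup.mem_map_of_mem _ hcd
      have h3 := mul_mem h1 h2
      rw [map_mul, map_inv] at h3
      simpa [mul_assoc] using h3


/-- Let `S ⊆ C^{[t,t+k]}` be a transversal of the granule (the quotient
map restricted to `S` is a bijection onto `Γ^{[t,t+k]}`). Then for `0 ≤ j ≤ k`:
`β^{t+j}(D_{k−1}^t)` is normal in `β^{t+j}(D_k^t)`, each `β^{t+j}(a)` for `a ∈ S` lies in
`β^{t+j}(D_k^t)`, and `a ↦ β^{t+j}(a)·β^{t+j}(D_{k−1}^t)` is a bijection from `S` onto
`β^{t+j}(D_k^t)/β^{t+j}(D_{k−1}^t)`; moreover all these quotients for `0 ≤ j ≤ k` have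
the same number of elements. -/
theorem statement16 (C : Subgroup (∀ t, A t)) (t : ℤ) (k : ℕ) (hk : 1 ≤ k)
    (S : Set ↥(Cint C t (t + (k : ℤ))))
    (hS : Set.BijOn
      (fun a : ↥(Cint C t (t + (k : ℤ))) =>
        (QuotientGroup.mk a :
          ↥(Cint C t (t + (k : ℤ))) ⧸ (granN C t k).subgroupOf (Cint C t (t + (k : ℤ)))))
      S Set.univ) :
    (∀ j : ℕ, j ≤ k →
      ((Qb C t ((k : ℤ) - 1) (j : ℤ)).subgroupOf (Qb C t (k : ℤ) (j : ℤ))).Normal ∧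
      (∀ a : ↥(Cint C t (t + (k : ℤ))), a ∈ S →
        betaRes C (t + (j : ℤ)) (a : ↥C) ∈ Qb C t (k : ℤ) (j : ℤ)) ∧
      Set.BijOn
        (fun a : ↥(Cint C t (t + (k : ℤ))) =>
          (QuotientGroup.mk
            (⟨betaRes C (t + (j : ℤ)) (a : ↥C),
              Subgroup.mem_map_of_mem _ (mem_D_of_mem_Cint C t k a.2)⟩ :
              ↥(Qb C t (k : ℤ) (j : ℤ))) :
            ↥(Qb C t (k : ℤ) (j : ℤ)) ⧸
              (Qb C t ((k : ℤ) - 1) (j : ℤ)).subgroupOf (Qb C t (k : ℤ) (j : ℤ))))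
        S Set.univ) ∧
    (∀ j j' : ℕ, j ≤ k → j' ≤ k →
      Nat.card
          (↥(Qb C t (k : ℤ) (j : ℤ)) ⧸
            (Qb C t ((k : ℤ) - 1) (j : ℤ)).subgroupOf (Qb C t (k : ℤ) (j : ℤ))) =
        Nat.card
          (↥(Qb C t (k : ℤ) (j' : ℤ)) ⧸
            (Qb C t ((k : ℤ) - 1) (j' : ℤ)).subgroupOf (Qb C t (k : ℤ) (j' : ℤ)))) := by
  refine ⟨fun j hj => ⟨?_, ?_, bij_main C t k hk S hS j hj⟩, fun j j' hj hj' => ?_⟩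
  · have : (Qb C t ((k : ℤ) - 1) (j : ℤ)).Normal :=
      (D_normal C _ t).map _ (MonoidHom.rangeRestrict_surjective _)
    infer_instance
  · intro a _
    exact Subgroup.mem_map_of_mem _ (mem_D_of_mem_Cint C t k a.2)
  · have e := (bij_main C t k hk S hS j hj).equiv
    have e' := (bij_main C t k hk S hS j' hj').equiv
    exact Nat.card_congr ((Equiv.Set.univ _).symm.trans
      ((e.symm.trans e').trans (Equiv.Set.univ _)))


end GroupSystemPaper
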